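/- Let γ ∈ ℂ with γ ≠ 0 and γ ≠ 1. On ℂ⁴ with coordinates (z₁,z₂,w₁,w₂), define the ℂ-linear maps τ₁₁ : (z₁,z₂,w₁,w₂) ↦ (z₁, z₂, −w₁ − γ^{−1}z₂, w₂) and τ₁₂ : (z₁,z₂,w₁,w₂) ↦ (z₁, z₂, w₁, −w₂ − (1 − conj γ)^{−1}z₁), the conjugate-linear involution ρ : (z₁,z₂,w₁,w₂) ↦ (conj w₁, conj w₂, conj z₁, conj z₂), and τ₂ⱼ := ρ∘τ₁ⱼ∘ρ for j = 1,2. Then: (a) τ₁₁, τ₁₂, τ₂₁, τ₂₂ are involutions and τ₁₁∘τ₁₂ = τ₁₂∘τ₁₁; (b) τ₁₁∘τ₂₁ = τ₂₁∘τ₁₁ and τ₁₂∘τ₂₂ = τ₂₂∘τ₁₂; (c) setting σ₁ := τ₁₁∘τ₂₂, σ₂ := τ₁₂∘τ₂₁, τᵢ := τᵢ₁∘τᵢ₂ for i = 1,2, and σ := τ₁∘τ₂, one has σ = σ₁∘σ₂ = σ₂∘σ₁; (d) σ₂^{−1} = ρ∘σ₁∘ρ and σ^{−1} = ρ∘σ∘ρ.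 -/

import Mathlib

/-!
`τ₁₁` and `τ₁₂` are affine reflections in `w₁` and `w₂` with centres depending on `z₂` and `z₁`,
and `ρ` exchanges the `z`- and `w`-coordinates. Hence `τ₁₁` alters only `w₁` and `τ₂₁` only `z₁`,
using `z₂` and `w₂` respectively, so they commute, as do `τ₁₂` and `τ₂₂`. Everything about `σ₁`,
`σ₂` and `σ` then follows from these relations alone, in any monoid.
-/

section Monoid

variable {M : Type*} [Monoid M] {a b r : M}

theorem mul_mul_rev_eq_one (ha : a * a = 1) (hb : b * b = 1) : a * b * (b * a) = 1 := by
  rw [mul_assoc, ← mul_assoc b, hb, one_mul, ha]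

theorem involution_conj_mul (hr : r * r = 1) (a b : M) :
    r * (a * b * r) = r * (a * r) * (r * (b * r)) := by
  calc r * (a * b * r) = r * (a * (1 * (b * r))) := by rw [one_mul, mul_assoc]
    _ = r * (a * (r * r * (b * r))) := by rw [hr]
    _ = r * (a * r) * (r * (b * r)) := by simp only [mul_assoc]

theorem involution_conj_conj (hr : r * r = 1) (a : M) : r * (r * (a * r) * r) = a := by
  calc r * (r * (a * r) * r) = r * r * (a * (r * r)) := by simp only [mul_assoc]
    _ = a := by rw [hr, one_mul, mul_one]

theorem involution_conj_mul_self (hr : r * r = 1) (ha : a * a = 1) :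
    r * (a * r) * (r * (a * r)) = 1 := by
  rw [← involution_conj_mul hr, ha, one_mul, hr]

theorem commute_involution_conj (hr : r * r = 1) (hab : Commute a b) :
    Commute (r * (a * r)) (r * (b * r)) := by
  rw [commute_iff_eq, ← involution_conj_mul hr, ← involution_conj_mul hr, hab.eq]

theorem mul_mul_self_eq_one_of_commute (hab : Commute a b) (ha : a * a = 1) (hb : b * b = 1) :
    a * b * (a * b) = 1 := by
  rw [hab.symm.mul_mul_mul_comm, ha, hb, one_mul]

end Monoid

section Reflections

variable {E F : Type*}

/-- The map `τ₁₁` in the coordinates `(z₁, z₂, w₁, w₂)`, with an arbitrary function `f` in place of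
multiplication by `γ⁻¹`. -/
def reflectFst [AddCommGroup E] (f : F → E) : E × F × E × F → E × F × E × F :=
  fun (z₁, z₂, w₁, w₂) => (z₁, z₂, -w₁ - f z₂, w₂)

/-- The map `τ₁₂` in the coordinates `(z₁, z₂, w₁, w₂)`, with an arbitrary function `g` in place of
multiplication by `(1 - conj γ)⁻¹`. -/
def reflectSnd [AddCommGroup F] (g : E → F) : E × F × E × F → E × F × E × F :=
  fun (z₁, z₂, w₁, w₂) => (z₁, z₂, w₁, -w₂ - g z₁)

/-- The map `ρ`, with arbitrary `star` operations in place of complex conjugation. -/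
def starSwap [Star E] [Star F] : E × F × E × F → E × F × E × F :=
  fun (z₁, z₂, w₁, w₂) => (star w₁, star w₂, star z₁, star z₂)

theorem reflectFst_involutive [AddCommGroup E] (f : F → E) :
    Function.Involutive (reflectFst f) :=
  fun _ => by simp [reflectFst]

theorem reflectSnd_involutive [AddCommGroup F] (g : E → F) :
    Function.Involutive (reflectSnd g) :=
  fun _ => by simp [reflectSnd]

theorem starSwap_involutive [InvolutiveStar E] [InvolutiveStar F] :
    Function.Involutive (starSwap : E × F × E × F → E × F × E × F) :=
  fun _ => by simp [starSwap]

theorem commute_reflectFst_reflectSnd [AddCommGroup E] [AddCommGroup F] (f : F → E) (g : E → F) :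
    Function.Commute (reflectFst f) (reflectSnd g) :=
  fun _ => rfl

variable [InvolutiveStar E] [InvolutiveStar F]

theorem starSwap_comp_reflectFst_comp_starSwap [AddCommGroup E] (f : F → E) :
    starSwap ∘ reflectFst f ∘ starSwap =
      fun (z₁, z₂, w₁, w₂) => (star (-star z₁ - f (star w₂)), z₂, w₁, w₂) := by
  funext _
  simp [starSwap, reflectFst]

theorem starSwap_comp_reflectSnd_comp_starSwap [AddCommGroup F] (g : E → F) :
    starSwap ∘ reflectSnd g ∘ starSwap =
      fun (z₁, z₂, w₁, w₂) => (z₁, star (-star z₂ - g (star w₁)), w₁, w₂) := by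
  funext _
  simp [starSwap, reflectSnd]

theorem commute_reflectFst_starSwap_conj [AddCommGroup E] (f : F → E) :
    Function.Commute (reflectFst f) (starSwap ∘ reflectFst f ∘ starSwap) := by
  rw [starSwap_comp_reflectFst_comp_starSwap]
  exact fun _ => rfl

theorem commute_reflectSnd_starSwap_conj [AddCommGroup F] (g : E → F) :
    Function.Commute (reflectSnd g) (starSwap ∘ reflectSnd g ∘ starSwap) := by
  rw [starSwap_comp_reflectSnd_comp_starSwap]
  exact fun _ => rfl

end Reflections

theorem stmt_8_general {E F : Type*} [AddCommGroup E] [InvolutiveStar E] [AddCommGroup F]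
    [InvolutiveStar F] (f : F → E) (g : E → F)
    {τ11 τ12 τ21 τ22 τ1 τ2 σ1 σ2 σ ρ : Function.End (E × F × E × F)}
    (hτ11 : τ11 = reflectFst f) (hτ12 : τ12 = reflectSnd g) (hρ : ρ = starSwap)
    (hτ21 : τ21 = ρ * (τ11 * ρ)) (hτ22 : τ22 = ρ * (τ12 * ρ))
    (hσ1 : σ1 = τ11 * τ22) (hσ2 : σ2 = τ12 * τ21)
    (hτ1 : τ1 = τ11 * τ12) (hτ2 : τ2 = τ21 * τ22) (hσ : σ = τ1 * τ2) :
    (τ11 * τ11 = 1 ∧ τ12 * τ12 = 1 ∧ τ21 * τ21 = 1 ∧ τ22 * τ22 = 1 ∧ Commute τ11 τ12) ∧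
    (Commute τ11 τ21 ∧ Commute τ12 τ22) ∧
    (σ = σ1 * σ2 ∧ σ = σ2 * σ1) ∧
    (σ2 * (ρ * (σ1 * ρ)) = 1 ∧ ρ * (σ1 * ρ) * σ2 = 1 ∧
      σ * (ρ * (σ * ρ)) = 1 ∧ ρ * (σ * ρ) * σ = 1) := by
  have ρ_sq : ρ * ρ = 1 := hρ ▸ starSwap_involutive.comp_self
  have τ11_sq : τ11 * τ11 = 1 := hτ11 ▸ (reflectFst_involutive f).comp_self
  have τ12_sq : τ12 * τ12 = 1 := hτ12 ▸ (reflectSnd_involutive g).comp_self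
  have τ21_sq : τ21 * τ21 = 1 := hτ21 ▸ involution_conj_mul_self ρ_sq τ11_sq
  have τ22_sq : τ22 * τ22 = 1 := hτ22 ▸ involution_conj_mul_self ρ_sq τ12_sq
  have comm₁ : Commute τ11 τ12 := hτ11 ▸ hτ12 ▸ (commute_reflectFst_reflectSnd f g).comp_eq
  have comm₂ : Commute τ21 τ22 := hτ21 ▸ hτ22 ▸ commute_involution_conj ρ_sq comm₁
  have comm_fst : Commute τ11 τ21 := by
    rw [hτ21, hτ11, hρ]
    exact (commute_reflectFst_starSwap_conj f).comp_eq
  have comm_snd : Commute τ12 τ22 := by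
    rw [hτ22, hτ12, hρ]
    exact (commute_reflectSnd_starSwap_conj g).comp_eq
  have τ1_sq : τ1 * τ1 = 1 := hτ1 ▸ mul_mul_self_eq_one_of_commute comm₁ τ11_sq τ12_sq
  have τ2_sq : τ2 * τ2 = 1 := hτ2 ▸ mul_mul_self_eq_one_of_commute comm₂ τ21_sq τ22_sq
  have conj_σ1 : ρ * (σ1 * ρ) = τ21 * τ12 := by
    rw [hσ1, involution_conj_mul ρ_sq, ← hτ21, hτ22, involution_conj_conj ρ_sq]
  have conj_τ1 : ρ * (τ1 * ρ) = τ2 := by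
    rw [hτ1, involution_conj_mul ρ_sq, ← hτ21, ← hτ22, hτ2]
  have conj_σ : ρ * (σ * ρ) = τ2 * τ1 := by
    rw [hσ, involution_conj_mul ρ_sq, conj_τ1, ← conj_τ1, involution_conj_conj ρ_sq]
  refine ⟨⟨τ11_sq, τ12_sq, τ21_sq, τ22_sq, comm₁⟩, ⟨comm_fst, comm_snd⟩, ⟨?_, ?_⟩, ?_⟩
  · rw [hσ, hτ1, hτ2, hσ1, hσ2, comm₂.eq, comm_snd.mul_mul_mul_comm]
  · rw [hσ, hτ1, hτ2, hσ1, hσ2, comm₁.eq, comm_fst.mul_mul_mul_comm]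
  · rw [conj_σ1, conj_σ, hσ2, hσ]
    exact ⟨mul_mul_rev_eq_one τ12_sq τ21_sq, mul_mul_rev_eq_one τ21_sq τ12_sq,
      mul_mul_rev_eq_one τ1_sq τ2_sq, mul_mul_rev_eq_one τ2_sq τ1_sq⟩

/-- The deck transformations of the complexified quadric of complex type: the four maps
`τ₁₁, τ₁₂, τ₂₁, τ₂₂` are involutions, `τ₁₁, τ₁₂` commute, `τ₁ⱼ` commutes with `τ₂ⱼ`,
`σ = σ₁∘σ₂ = σ₂∘σ₁`, and `σ₂⁻¹ = ρ∘σ₁∘ρ`, `σ⁻¹ = ρ∘σ∘ρ`. -/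
theorem stmt_8 (γ : ℂ) (hγ0 : γ ≠ 0) (hγ1 : γ ≠ 1)
    (τ11 τ12 τ21 τ22 τ1 τ2 σ1 σ2 σ ρ : ℂ × ℂ × ℂ × ℂ → ℂ × ℂ × ℂ × ℂ)
    (hτ11 : ∀ z₁ z₂ w₁ w₂ : ℂ, τ11 (z₁, z₂, w₁, w₂) = (z₁, z₂, -w₁ - γ⁻¹ * z₂, w₂))
    (hτ12 : ∀ z₁ z₂ w₁ w₂ : ℂ,
      τ12 (z₁, z₂, w₁, w₂) = (z₁, z₂, w₁, -w₂ - (1 - (starRingEnd ℂ) γ)⁻¹ * z₁))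
    (hρ : ∀ z₁ z₂ w₁ w₂ : ℂ,
      ρ (z₁, z₂, w₁, w₂) =
        ((starRingEnd ℂ) w₁, (starRingEnd ℂ) w₂, (starRingEnd ℂ) z₁, (starRingEnd ℂ) z₂))
    (hτ21 : τ21 = ρ ∘ τ11 ∘ ρ) (hτ22 : τ22 = ρ ∘ τ12 ∘ ρ)
    (hσ1 : σ1 = τ11 ∘ τ22) (hσ2 : σ2 = τ12 ∘ τ21)
    (hτ1 : τ1 = τ11 ∘ τ12) (hτ2 : τ2 = τ21 ∘ τ22) (hσ : σ = τ1 ∘ τ2) :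
    (τ11 ∘ τ11 = id ∧ τ12 ∘ τ12 = id ∧ τ21 ∘ τ21 = id ∧ τ22 ∘ τ22 = id ∧
      τ11 ∘ τ12 = τ12 ∘ τ11) ∧
    (τ11 ∘ τ21 = τ21 ∘ τ11 ∧ τ12 ∘ τ22 = τ22 ∘ τ12) ∧
    (σ = σ1 ∘ σ2 ∧ σ = σ2 ∘ σ1) ∧
    (σ2 ∘ (ρ ∘ σ1 ∘ ρ) = id ∧ (ρ ∘ σ1 ∘ ρ) ∘ σ2 = id ∧
      σ ∘ (ρ ∘ σ ∘ ρ) = id ∧ (ρ ∘ σ ∘ ρ) ∘ σ = id) :=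
  stmt_8_general (γ⁻¹ * ·) ((1 - (starRingEnd ℂ) γ)⁻¹ * ·) (funext fun _ => hτ11 ..)
    (funext fun _ => hτ12 ..) (funext fun _ => hρ ..) hτ21 hτ22 hσ1 hσ2 hτ1 hτ2 hσ
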